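/- arXiv:math/0409264 — 7 statements merged into one kernel-verified Lean document; each statement's English description precedes it below -/
import Mathlib

section
/- Let P be an n×n row-stochastic real matrix and let σ be a state symmetry of P. Then P satisfies the (Dynkin) strong-lumpability condition with respect to the partition of the index set into orbits of the cyclic group generated by σ: for any two indices i and i' lying in the same ⟨σ⟩-orbit and any ⟨σ⟩-orbit O, the row sums agree: ∑_{j ∈ O} P i j = ∑_{j ∈ O} P i' j. -/
open scoped Classical

/-! A symmetry of `P` carries row `i` to row `σ i`. If `σ` belongs to a group `H` of symmetries, it
also permutes every `H`-orbit, so the sums of these two rows over an orbit are reindexings of each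
other. -/

section StateSymmetryGroup

variable {ι R : Type*}

/-- The group of state symmetries of a square matrix: the permutations of the index type which,
applied simultaneously to rows and columns, leave the matrix unchanged. -/
def stateSymmetryGroup (P : Matrix ι ι R) : Subgroup (Equiv.Perm ι) where
  carrier := {σ | ∀ i j, P (σ i) (σ j) = P i j}
  one_mem' _ _ := rfl
  mul_mem' hσ hτ i j := (hσ _ _).trans (hτ i j)
  inv_mem' {σ} hσ i j := by simpa using (hσ (σ⁻¹ i) (σ⁻¹ j)).symm

variable [AddCommMonoid R] {P : Matrix ι ι R}

theorem hasSum_row_apply_iff [TopologicalSpace R] {σ : Equiv.Perm ι} (hσ : σ ∈ stateSymmetryGroup P)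
    {s : Set ι} (hs : ∀ j, j ∈ s ↔ σ j ∈ s) (i : ι) (a : R) :
    HasSum (fun j : s ↦ P (σ i) j) a ↔ HasSum (fun j : s ↦ P i j) a := by
  have hrow : (fun j : s ↦ P (σ i) j) ∘ σ.subtypeEquiv hs = fun j : s ↦ P i j :=
    funext fun j ↦ hσ i j
  rw [← hrow, Equiv.hasSum_iff]

theorem strong_lumpability_of_state_symmetry_general [TopologicalSpace R]
    {H : Subgroup (Equiv.Perm ι)} (hH : H ≤ stateSymmetryGroup P) {i i' : ι}
    (hi : i' ∈ MulAction.orbit H i) (m : ι) (a : R) :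
    HasSum (fun j : MulAction.orbit H m ↦ P i j) a ↔
      HasSum (fun j : MulAction.orbit H m ↦ P i' j) a := by
  obtain ⟨τ, rfl⟩ := hi
  have horbit (j : ι) : j ∈ MulAction.orbit H m ↔ τ • j ∈ MulAction.orbit H m := by
    rw [MulAction.mem_orbit_symm, ← MulAction.orbit_smul τ j, MulAction.mem_orbit_symm]
  exact (hasSum_row_apply_iff (hH τ.2) horbit i a).symm

theorem sum_orbit_row_eq [Fintype ι] {H : Subgroup (Equiv.Perm ι)}
    (hH : H ≤ stateSymmetryGroup P) {i i' : ι} (hi : i' ∈ MulAction.orbit H i) (m : ι)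
    [DecidablePred (· ∈ MulAction.orbit H m)] :
    ∑ j with j ∈ MulAction.orbit H m, P i j = ∑ j with j ∈ MulAction.orbit H m, P i' j := by
  -- Any Hausdorff topology on `R` makes finite sums the unique values of `HasSum`.
  let _ : TopologicalSpace R := ⊥
  have _ : DiscreteTopology R := ⟨rfl⟩
  simpa only [tsum_fintype, ← Finset.sum_subtype_eq_sum_filter, Finset.subtype_univ] using
    tsum_eq_tsum_of_hasSum_iff_hasSum fun {a} ↦
      strong_lumpability_of_state_symmetry_general hH hi m a

end StateSymmetryGroup

theorem mem_orbit_zpowers_iff_exists_pow_smul_eq {G ι : Type*} [Group G] [MulAction G ι] {g : G}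
    (hg : IsOfFinOrder g) {i j : ι} :
    j ∈ MulAction.orbit (Subgroup.zpowers g) i ↔ ∃ k : ℕ, g ^ k • i = j := by
  simp only [MulAction.mem_orbit_iff, Subtype.exists, ← hg.mem_powers_iff_mem_zpowers,
    Submonoid.mem_powers_iff, Subgroup.mk_smul, exists_prop, exists_exists_eq_and]

/-- A row-stochastic matrix with a state symmetry `σ` satisfies the
strong-lumpability condition with respect to the partition into `⟨σ⟩`-orbits:
row sums over any orbit agree for indices lying in the same orbit. -/
theorem strong_lumpability_of_state_symmetry
    (n : ℕ) (P : Matrix (Fin n) (Fin n) ℝ) (σ : Equiv.Perm (Fin n))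
    (hnonneg : ∀ i j, 0 ≤ P i j) (hrow : ∀ i, ∑ j, P i j = 1)
    (hsym : ∀ i j, P (σ i) (σ j) = P i j) :
    ∀ i i' : Fin n, (∃ k : ℕ, (σ ^ k) i = i') →
      ∀ m : Fin n,
        ∑ j ∈ Finset.univ.filter (fun j => ∃ k : ℕ, (σ ^ k) m = j), P i j =
        ∑ j ∈ Finset.univ.filter (fun j => ∃ k : ℕ, (σ ^ k) m = j), P i' j := by
  intro i i' hi m
  simp only [← Equiv.Perm.smul_def,
    ← mem_orbit_zpowers_iff_exists_pow_smul_eq (isOfFinOrder_of_finite σ)] at hi ⊢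
  exact sum_orbit_row_eq (Subgroup.zpowers_le.2 hsym) hi m
end

section
/- Let P be an n×n row-stochastic real matrix with a state symmetry σ. Then there exists a row-stochastic matrix Q, indexed by the ⟨σ⟩-orbits of the index set, such that for every index i and every ⟨σ⟩-orbit O one has ∑_{j ∈ O} P i j = Q (orbit of i) O; consequently the aggregated (lumped) transition probabilities are well defined on the orbit partition. -/
open scoped Classical

/-!
Reindexing the sum over an orbit by a symmetry `g` turns the row of `g • i` into the row of `i`
without leaving the orbit, so the sum of a row over an orbit depends only on the orbit of the row.
-/

section Lumpable

variable {α R : Type*} [Fintype α] [AddCommMonoid R] {s : Setoid α} {M : Matrix α α R}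

/-- Strong lumpability of a matrix with respect to the partition into classes of `s`: the sum of a
row over a class is the same for all rows in one class. -/
def IsLumpable (s : Setoid α) (M : Matrix α α R) : Prop :=
  ∀ ⦃i i' : α⦄, s i i' → ∀ b : Quotient s,
    ∑ j with Quotient.mk s j = b, M i j = ∑ j with Quotient.mk s j = b, M i' j

namespace IsLumpable

/-- The matrix of aggregated entries of a lumpable matrix, indexed by the classes of `s`. -/
noncomputable def lumpedMatrix (hM : IsLumpable s M) : Matrix (Quotient s) (Quotient s) R :=
  fun a b ↦ a.lift (fun i ↦ ∑ j with Quotient.mk s j = b, M i j) fun _ _ h ↦ hM h b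

theorem lumpedMatrix_mk (hM : IsLumpable s M) (i : α) (b : Quotient s) :
    hM.lumpedMatrix (Quotient.mk s i) b = ∑ j with Quotient.mk s j = b, M i j :=
  rfl

theorem lumpedMatrix_nonneg [PartialOrder R] [IsOrderedAddMonoid R] (hM : IsLumpable s M)
    (h : ∀ i j, 0 ≤ M i j) (a b : Quotient s) : 0 ≤ hM.lumpedMatrix a b := by
  induction a using Quotient.inductionOn with
  | h i => exact Finset.sum_nonneg fun j _ ↦ h i j

theorem sum_lumpedMatrix_mk (hM : IsLumpable s M) (i : α) :
    ∑ b, hM.lumpedMatrix (Quotient.mk s i) b = ∑ j, M i j :=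
  Finset.sum_fiberwise _ _ _

end IsLumpable

end Lumpable

theorem IsLumpable.lumpedMatrix_mem_rowStochastic {α R : Type*} [Fintype α] [DecidableEq α]
    [Semiring R] [PartialOrder R] [IsOrderedRing R] {s : Setoid α} {M : Matrix α α R}
    (hM : IsLumpable s M) (h : M ∈ Matrix.rowStochastic R α) :
    hM.lumpedMatrix ∈ Matrix.rowStochastic R (Quotient s) := by
  rw [Matrix.mem_rowStochastic_iff_sum] at h ⊢
  refine ⟨hM.lumpedMatrix_nonneg h.1, fun a ↦ ?_⟩
  induction a using Quotient.inductionOn with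
  | h i => rw [hM.sum_lumpedMatrix_mk, h.2]

section Symmetry

/-- The state symmetries of a square matrix, bundled as a subgroup so that it contains `⟨σ⟩` as soon
as it contains `σ`. -/
def stateSymmetries {α R : Type*} (M : Matrix α α R) : Subgroup (Equiv.Perm α) where
  carrier := {σ | ∀ i j, M (σ i) (σ j) = M i j}
  one_mem' _ _ := rfl
  mul_mem' hσ hτ i j := (hσ _ _).trans (hτ i j)
  inv_mem' {σ} hσ i j := by simpa using (hσ (σ⁻¹ i) (σ⁻¹ j)).symm

variable {G α R : Type*} [Group G] [MulAction G α]

theorem isLumpable_orbitRel_of_smul_invariant [Fintype α] [AddCommMonoid R] {M : Matrix α α R}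
    (hM : ∀ (g : G) (i j : α), M (g • i) (g • j) = M i j) :
    IsLumpable (MulAction.orbitRel G α) M := by
  rintro _ i ⟨g, rfl⟩ b
  have mk_smul (j : α) : Quotient.mk (MulAction.orbitRel G α) (g • j) = Quotient.mk _ j :=
    Quotient.sound ⟨g, rfl⟩
  refine (Finset.sum_equiv (MulAction.toPerm g) (fun j ↦ ?_) fun j _ ↦ ?_).symm
  · simp [mk_smul]
  · exact (hM g i j).symm

theorem mk_orbitRel_zpowers_eq_iff {g : G} (hg : IsOfFinOrder g) {x y : α} :
    Quotient.mk (MulAction.orbitRel (Subgroup.zpowers g) α) x = Quotient.mk _ y ↔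
      ∃ k : ℕ, g ^ k • y = x := by
  rw [Quotient.eq, MulAction.orbitRel_apply]
  constructor
  · rintro ⟨⟨h, hh⟩, rfl⟩
    obtain ⟨k, rfl⟩ := hg.mem_powers_iff_mem_zpowers.2 hh
    exact ⟨k, rfl⟩
  · rintro ⟨k, rfl⟩
    exact ⟨⟨g ^ k, Subgroup.npow_mem_zpowers g k⟩, rfl⟩

end Symmetry

theorem exists_lumped_matrix_of_state_symmetry_general {α R : Type*} [Fintype α] [DecidableEq α]
    [Semiring R] [PartialOrder R] [IsOrderedRing R] {P : Matrix α α R} {σ : Equiv.Perm α}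
    (hP : P ∈ Matrix.rowStochastic R α) (hσ : σ ∈ stateSymmetries P) :
    ∃ Q ∈ Matrix.rowStochastic R (Quotient (MulAction.orbitRel (Subgroup.zpowers σ) α)),
      ∀ i m : α, ∑ j with ∃ k : ℕ, (σ ^ k) m = j, P i j =
        Q (Quotient.mk _ i) (Quotient.mk _ m) := by
  have hlump : IsLumpable (MulAction.orbitRel (Subgroup.zpowers σ) α) P :=
    isLumpable_orbitRel_of_smul_invariant fun g ↦ Subgroup.zpowers_le.2 hσ g.2
  refine ⟨hlump.lumpedMatrix, hlump.lumpedMatrix_mem_rowStochastic hP, fun i m ↦ ?_⟩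
  simp only [hlump.lumpedMatrix_mk, mk_orbitRel_zpowers_eq_iff (isOfFinOrder_of_finite σ),
    Equiv.Perm.smul_def]

/-- A row-stochastic matrix `P` with a state symmetry `σ` admits a
row-stochastic lumped matrix `Q`, indexed by the `⟨σ⟩`-orbits of the index set, such that
for every index `i` and every orbit, the row sum of `P` over the orbit equals the
corresponding entry of `Q`; in particular the lumped transition probabilities are well
defined on the orbit partition. -/
theorem exists_lumped_matrix_of_state_symmetry
    (n : ℕ) (P : Matrix (Fin n) (Fin n) ℝ) (σ : Equiv.Perm (Fin n))
    (hnonneg : ∀ i j, 0 ≤ P i j) (hrow : ∀ i, ∑ j, P i j = 1)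
    (hsym : ∀ i j, P (σ i) (σ j) = P i j) :
    ∃ Q : Matrix (Quotient (MulAction.orbitRel (↥(Subgroup.zpowers σ)) (Fin n)))
                 (Quotient (MulAction.orbitRel (↥(Subgroup.zpowers σ)) (Fin n))) ℝ,
      (∀ a b, 0 ≤ Q a b) ∧
      (∀ a, ∑ b, Q a b = 1) ∧
      (∀ i m : Fin n,
        ∑ j ∈ Finset.univ.filter (fun j => ∃ k : ℕ, (σ ^ k) m = j), P i j =
          Q (Quotient.mk (MulAction.orbitRel (↥(Subgroup.zpowers σ)) (Fin n)) i)
            (Quotient.mk (MulAction.orbitRel (↥(Subgroup.zpowers σ)) (Fin n)) m)) := by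
  simpa only [Matrix.mem_rowStochastic_iff_sum, and_assoc] using
    exists_lumped_matrix_of_state_symmetry_general
      (Matrix.mem_rowStochastic_iff_sum.2 ⟨hnonneg, hrow⟩) hsym
end

section
/- Let P be an n×n row-stochastic real matrix with a state symmetry σ. Then P satisfies the exact-lumpability condition with respect to the partition into ⟨σ⟩-orbits: for any two indices i and i' lying in the same ⟨σ⟩-orbit and any ⟨σ⟩-orbit O, the column sums agree: ∑_{j ∈ O} P j i = ∑_{j ∈ O} P j i'. -/
open scoped Classical

/- A symmetry `σ` permutes the rows of any `σ`-invariant set among themselves, so reindexing by `σ`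
turns the sum of column `i` over that set into the sum of column `σ i`. The column sum is therefore
a `σ`-invariant function of the column, hence constant on orbits. -/

section

variable {ι β : Type*} {σ : Equiv.Perm ι}

theorem eq_of_sameCycle_of_invariant {f : ι → β} (hf : ∀ i, f (σ i) = f i) {i i' : ι}
    (h : σ.SameCycle i i') : f i = f i' := by
  obtain ⟨k, rfl⟩ := h
  induction k using Int.induction_on with
  | zero => rfl
  | succ k ih => rw [ih, add_comm, zpow_one_add, Equiv.Perm.mul_apply, hf]
  | pred k ih =>
    have apply_pred : σ ((σ ^ (-(k : ℤ) - 1)) i) = (σ ^ (-(k : ℤ))) i := by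
      rw [← Equiv.Perm.mul_apply, ← zpow_one_add, add_sub_cancel]
    rw [ih, ← apply_pred, hf]

theorem sameCycle_iff_exists_pow_eq [Finite ι] {i i' : ι} :
    σ.SameCycle i i' ↔ ∃ k : ℕ, (σ ^ k) i = i' :=
  ⟨fun h => h.exists_nat_pow_eq, fun ⟨k, hk⟩ => ⟨k, hk⟩⟩

variable {R : Type*} [AddCommMonoid R] {M : Matrix ι ι R} {O : Finset ι}

theorem sum_column_apply_eq_of_state_symmetry (hM : ∀ i j, M (σ i) (σ j) = M i j)
    (hO : ∀ j, σ j ∈ O ↔ j ∈ O) (i : ι) : ∑ j ∈ O, M j (σ i) = ∑ j ∈ O, M j i :=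
  (Finset.sum_equiv σ (fun j => (hO j).symm) fun j _ => (hM j i).symm).symm

theorem exact_lumpability_condition_of_state_symmetry_general
    (hM : ∀ i j, M (σ i) (σ j) = M i j) (hO : ∀ j, σ j ∈ O ↔ j ∈ O) {i i' : ι}
    (h : σ.SameCycle i i') : ∑ j ∈ O, M j i = ∑ j ∈ O, M j i' :=
  eq_of_sameCycle_of_invariant (f := fun i => ∑ j ∈ O, M j i)
    (sum_column_apply_eq_of_state_symmetry hM hO) h

end

/-- A row-stochastic matrix with a state symmetry `σ` satisfies the
exact-lumpability condition with respect to the partition into `⟨σ⟩`-orbits: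
column sums over any orbit agree for indices lying in the same orbit. -/
theorem exact_lumpability_condition_of_state_symmetry
    (n : ℕ) (P : Matrix (Fin n) (Fin n) ℝ) (σ : Equiv.Perm (Fin n))
    (hnonneg : ∀ i j, 0 ≤ P i j) (hrow : ∀ i, ∑ j, P i j = 1)
    (hsym : ∀ i j, P (σ i) (σ j) = P i j) :
    ∀ i i' : Fin n, (∃ k : ℕ, (σ ^ k) i = i') →
      ∀ m : Fin n,
        ∑ j ∈ Finset.univ.filter (fun j => ∃ k : ℕ, (σ ^ k) m = j), P j i =
        ∑ j ∈ Finset.univ.filter (fun j => ∃ k : ℕ, (σ ^ k) m = j), P j i' := by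
  intro i i' hi m
  refine exact_lumpability_condition_of_state_symmetry_general hsym (fun j => ?_)
    (sameCycle_iff_exists_pow_eq.mpr hi)
  simp only [Finset.mem_filter_univ, ← sameCycle_iff_exists_pow_eq,
    Equiv.Perm.sameCycle_apply_right]
end

section
/- Let P be an n×n row-stochastic real matrix and v a probability vector (nonnegative entries summing to 1) on the same index set, and suppose σ is a common state symmetry of P and v. Then the Markov chain X = (P, v) is exactly lumpable with respect to the partition into ⟨σ⟩-orbits: for every time n ∈ ℕ and every index i, the probability of being in state i at time n equals the aggregated probability of the orbit of i divided by the orbit size, i.e. (vᵀ Pⁿ) i = (∑_{j ∈ orbit(i)} (vᵀ Pⁿ) j) / |orbit(i)|. -/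
open scoped Classical
open Matrix

/-!
Relabelling the states by `σ` changes neither the transition matrix nor the initial vector, so it
does not change the distribution at any time. Every such distribution is therefore constant on each
`⟨σ⟩`-orbit, and a constant is its own average.
-/

theorem sum_div_card_eq_of_forall_eq {ι K : Type*} [DivisionSemiring K] [CharZero K]
    {s : Finset ι} (hs : s.Nonempty) {f : ι → K} {a : K} (hf : ∀ i ∈ s, f i = a) :
    (∑ i ∈ s, f i) / (s.card : K) = a := by
  have hcard : (s.card : K) ≠ 0 := Nat.cast_ne_zero.2 hs.card_ne_zero
  rw [Finset.sum_eq_card_nsmul hf, nsmul_eq_mul, Nat.cast_comm, mul_div_cancel_right₀ a hcard]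

theorem vecMul_apply_eq_of_invariant {m n R : Type*} [Fintype m] [NonUnitalNonAssocSemiring R]
    {M : Matrix m n R} {v : m → R} {σ : Equiv.Perm m} {τ : n → n}
    (hM : ∀ i j, M (σ i) (τ j) = M i j) (hv : ∀ i, v (σ i) = v i) (j : n) :
    (v ᵥ* M) (τ j) = (v ᵥ* M) j :=
  calc ∑ i, v i * M i (τ j)
    _ = ∑ i, v (σ i) * M (σ i) (τ j) := (Equiv.sum_comp σ fun i => v i * M i (τ j)).symm
    _ = ∑ i, v i * M i j := by simp only [hv, hM]

theorem vecMul_pow_apply_eq_of_invariant {ι R : Type*} [Fintype ι] [DecidableEq ι] [Semiring R]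
    {P : Matrix ι ι R} {v : ι → R} {σ : Equiv.Perm ι}
    (hP : ∀ i j, P (σ i) (σ j) = P i j) (hv : ∀ i, v (σ i) = v i) (N : ℕ) (i : ι) :
    (v ᵥ* P ^ N) (σ i) = (v ᵥ* P ^ N) i := by
  induction N generalizing i with
  | zero => simpa using hv i
  | succ N ih =>
    rw [pow_succ, ← vecMul_vecMul]
    exact vecMul_apply_eq_of_invariant hP ih i

theorem exactly_lumpable_of_common_state_symmetry_general {ι K : Type*} [Fintype ι] [DecidableEq ι]
    [DivisionSemiring K] [CharZero K] (P : Matrix ι ι K) (v : ι → K) (σ : Equiv.Perm ι)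
    (hP : ∀ i j, P (σ i) (σ j) = P i j) (hv : ∀ i, v (σ i) = v i) (N : ℕ) (i : ι) :
    (v ᵥ* P ^ N) i =
      (∑ j ∈ Finset.univ.filter (fun j => ∃ k : ℕ, (σ ^ k) i = j), (v ᵥ* P ^ N) j) /
        ((Finset.univ.filter (fun j => ∃ k : ℕ, (σ ^ k) i = j)).card : K) := by
  have orbit_nonempty : (Finset.univ.filter fun j => ∃ k : ℕ, (σ ^ k) i = j).Nonempty :=
    ⟨i, Finset.mem_filter.2 ⟨Finset.mem_univ i, 0, rfl⟩⟩
  have hσ : (v ᵥ* P ^ N) ∘ σ = v ᵥ* P ^ N := funext (vecMul_pow_apply_eq_of_invariant hP hv N)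
  refine (sum_div_card_eq_of_forall_eq orbit_nonempty fun j hj => ?_).symm
  obtain ⟨k, rfl⟩ := (Finset.mem_filter.1 hj).2
  exact congrFun (Function.iterate_invariant hσ k) i

/-- If `σ` is a common state symmetry of the row-stochastic matrix `P` and of
the probability vector `v`, then the Markov chain `(P, v)` is exactly lumpable with respect
to the partition into `⟨σ⟩`-orbits: at any time `N`, the probability of any state `i` equals
the aggregated probability of its orbit divided by the orbit size. -/
theorem exactly_lumpable_of_common_state_symmetry
    (n : ℕ) (P : Matrix (Fin n) (Fin n) ℝ) (v : Fin n → ℝ) (σ : Equiv.Perm (Fin n))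
    (hnonneg : ∀ i j, 0 ≤ P i j) (hrow : ∀ i, ∑ j, P i j = 1)
    (hv0 : ∀ i, 0 ≤ v i) (hv1 : ∑ i, v i = 1)
    (hPsym : ∀ i j, P (σ i) (σ j) = P i j)
    (hvsym : ∀ i, v (σ i) = v i) :
    ∀ (N : ℕ) (i : Fin n),
      (v ᵥ* (P ^ N)) i =
        (∑ j ∈ Finset.univ.filter (fun j => ∃ k : ℕ, (σ ^ k) i = j), (v ᵥ* (P ^ N)) j) /
          ((Finset.univ.filter (fun j => ∃ k : ℕ, (σ ^ k) i = j)).card : ℝ) :=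
  exactly_lumpable_of_common_state_symmetry_general P v σ hPsym hvsym
end

section
/- For every set P of permutations of the finite index set {0,…,n−1}, there exists a single permutation ρ̂ of {0,…,n−1} such that the vectors in ℝⁿ admitting every element of P as a state symmetry are exactly the vectors admitting ρ̂ as a state symmetry: {v ∈ ℝⁿ | ∀ ρ ∈ P, ∀ i, v (ρ i) = v i} = {v ∈ ℝⁿ | ∀ i, v (ρ̂ i) = v i}. -/
/-!
Invariance of `v` under `P` means that `v` is constant on the orbits of the group generated by `P`.
So any permutation with the same orbits has the same invariant vectors, and one is obtained by
choosing a single cycle on each orbit.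
-/

open Equiv MulAction

theorem orbitRel_closure_le_iff {G α : Type*} [Group G] [MulAction G α] {S : Set G}
    {r : Setoid α} :
    orbitRel (Subgroup.closure S) α ≤ r ↔ ∀ g ∈ S, ∀ a, r (g • a) a := by
  constructor
  · intro h g hg a
    exact h ⟨⟨g, Subgroup.subset_closure hg⟩, rfl⟩
  · intro h
    suffices ∀ g ∈ Subgroup.closure S, ∀ a, r (g • a) a by
      rintro _ a ⟨⟨g, hg⟩, rfl⟩
      exact this g hg a
    intro g hg
    induction hg using Subgroup.closure_induction with
    | mem g hg => exact h g hg
    | one => simp only [one_smul, r.refl, implies_true]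
    | mul g₁ g₂ _ _ ih₁ ih₂ =>
      intro a
      rw [mul_smul]
      exact r.trans (ih₁ (g₂ • a)) (ih₂ a)
    | inv g _ ih =>
      intro a
      simpa only [smul_inv_smul] using r.symm (ih (g⁻¹ • a))

theorem orbitRel_zpowers_eq_sameCycle_setoid {α : Type*} (σ : Perm α) :
    orbitRel (Subgroup.zpowers σ) α = Perm.SameCycle.setoid σ := by
  ext a b
  calc
    orbitRel (Subgroup.zpowers σ) α a b ↔ σ.SameCycle b a := Subgroup.exists_zpowers
    _ ↔ σ.SameCycle a b := Perm.sameCycle_comm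

theorem subtypePerm_ofFiberEquiv {α γ : Type*} {f : α → γ} (e : ∀ c, Perm {a // f a = c})
    (c : γ) :
    Perm.subtypePerm (ofFiberEquiv e) (fun a => by rw [ofFiberEquiv_map e]) = e c := by
  ext ⟨a, rfl⟩
  rfl

theorem exists_perm_sameCycle_setoid_eq_ker {α γ : Type*} (f : α → γ)
    (hf : ∀ c, (f ⁻¹' {c}).Countable) :
    ∃ ρ : Perm α, Perm.SameCycle.setoid ρ = Setoid.ker f := by
  have cycle_on_fiber (c : γ) : ∃ e : Perm {a // f a = c}, ∀ a b, e.SameCycle a b := by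
    have : Countable {a // f a = c} := (hf c).to_subtype
    obtain ⟨e, he, -⟩ := (Set.countable_univ (α := {a // f a = c})).exists_cycleOn
    exact ⟨e, fun a b => he.2 (Set.mem_univ a) (Set.mem_univ b)⟩
  choose e he using cycle_on_fiber
  refine ⟨ofFiberEquiv e, le_antisymm ?_ fun a b hab => ?_⟩
  · rw [← orbitRel_zpowers_eq_sameCycle_setoid, Subgroup.zpowers_eq_closure,
      orbitRel_closure_le_iff]
    rintro _ rfl a
    exact ofFiberEquiv_map e a
  · have h := he (f b) ⟨a, hab⟩ ⟨b, rfl⟩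
    rwa [← subtypePerm_ofFiberEquiv e, Perm.sameCycle_subtypePerm] at h

theorem exists_perm_orbitRel_zpowers_eq {α : Type*} (r : Setoid α)
    (hr : ∀ a, {b | r b a}.Countable) :
    ∃ ρ : Perm α, orbitRel (Subgroup.zpowers ρ) α = r := by
  simp_rw [orbitRel_zpowers_eq_sameCycle_setoid]
  rw [← Setoid.ker_mk_eq r]
  refine exists_perm_sameCycle_setoid_eq_ker _ (Quotient.ind fun a => ?_)
  simpa only [Set.preimage, Set.mem_singleton_iff, Quotient.eq] using hr a

theorem exists_single_perm_with_same_vector_state_symmetries_general {α β : Type*}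
    (P : Set (Perm α)) (hP : ∀ a : α, (orbit (Subgroup.closure P) a).Countable) :
    ∃ ρ : Perm α,
      {v : α → β | ∀ σ ∈ P, ∀ i, v (σ i) = v i} = {v : α → β | ∀ i, v (ρ i) = v i} := by
  obtain ⟨ρ, hρ⟩ := exists_perm_orbitRel_zpowers_eq (orbitRel (Subgroup.closure P) α) hP
  refine ⟨ρ, Set.ext fun v => ?_⟩
  calc
    (∀ σ ∈ P, ∀ i, v (σ i) = v i)
      ↔ orbitRel (Subgroup.closure P) α ≤ Setoid.ker v :=
      (orbitRel_closure_le_iff (r := Setoid.ker v)).symm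
    _ ↔ orbitRel (Subgroup.closure {ρ}) α ≤ Setoid.ker v := by
      rw [← hρ, Subgroup.zpowers_eq_closure]
    _ ↔ ∀ σ ∈ ({ρ} : Set (Perm α)), ∀ i, v (σ i) = v i := orbitRel_closure_le_iff
    _ ↔ ∀ i, v (ρ i) = v i := by simp only [Set.mem_singleton_iff, forall_eq]

/-- For any set `P` of permutations of `{0,…,n−1}` there is a single
permutation `ρ̂` such that a vector admits every element of `P` as a state symmetry
iff it admits `ρ̂` as a state symmetry. -/
theorem exists_single_perm_with_same_vector_state_symmetries
    (n : ℕ) (P : Set (Equiv.Perm (Fin n))) :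
    ∃ ρ : Equiv.Perm (Fin n),
      {v : Fin n → ℝ | ∀ σ ∈ P, ∀ i, v (σ i) = v i} =
      {v : Fin n → ℝ | ∀ i, v (ρ i) = v i} :=
  exists_single_perm_with_same_vector_state_symmetries_general P fun _ => Set.to_countable _
end

section
/- Let P = {σ₁, σ₂} where σ₁ = (0 1)(2 3) and σ₂ = (0 2)(1 3) are double transpositions of {0,1,2,3}. If ρ̂ is any permutation of {0,1,2,3} such that the vectors in ℝ⁴ having ρ̂ as a state symmetry are exactly the vectors having both σ₁ and σ₂ as state symmetries, then ρ̂ does not belong to the subgroup of the symmetric group generated by {σ₁, σ₂} (the Klein four-group). -/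
/-! In an abelian group of permutations generated by involutions every `ρ` satisfies `ρ² = 1`,
so the cycle of a point `a` under `ρ` is contained in `{a, ρ a}`. On the other hand, the indicator
of this cycle is `ρ`-invariant; if every `ρ`-invariant vector is also invariant under `σ` and `τ`,
the cycle contains `a`, `σ a` and `τ a`, which is too much when these are distinct. -/

open Equiv

theorem pow_eq_one_of_mem_closure {G : Type*} [Group G] {s : Set G} {n : ℕ}
    (hcomm : ∀ x ∈ s, ∀ y ∈ s, x * y = y * x) (hpow : ∀ x ∈ s, x ^ n = 1) {g : G}
    (hg : g ∈ Subgroup.closure s) : g ^ n = 1 := by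
  have : IsMulCommutative (Subgroup.closure s) := Subgroup.isMulCommutative_closure hcomm
  induction hg using Subgroup.closure_induction with
  | mem x hx => exact hpow x hx
  | one => exact one_pow n
  | mul x y hx hy ihx ihy =>
    have hxy : Commute x y := setLike_mul_comm hx hy
    rw [hxy.mul_pow, ihx, ihy, one_mul]
  | inv x _ ih => rw [inv_pow, ih, inv_one]

section SameCycle

variable {α : Type*} {ρ : Perm α} {a b : α}

theorem sameCycle_of_forall_invariant_apply_eq {R : Type*} [Nontrivial R]
    (h : ∀ v : α → R, (∀ i, v (ρ i) = v i) → v b = v a) : ρ.SameCycle a b := by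
  classical
  obtain ⟨x, y, hxy⟩ := exists_pair_ne R
  by_contra hab
  have hv := h (fun i => if ρ.SameCycle a i then x else y) fun i => by
    simp only [Perm.sameCycle_apply_right]
  rw [if_neg hab, if_pos (Perm.SameCycle.refl ρ a)] at hv
  exact hxy hv.symm

theorem eq_or_eq_apply_of_sameCycle (hρ : ρ (ρ a) = a) (hab : ρ.SameCycle a b) :
    b = a ∨ b = ρ a := by
  obtain ⟨k, rfl⟩ := hab
  exact Perm.zpow_apply_eq_of_apply_apply_eq_self hρ k

end SameCycle

theorem perm_with_klein_symmetry_space_not_in_klein_group_general {α R : Type*} [Nontrivial R]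
    {ρ σ τ : Perm α} (hστ : σ * τ = τ * σ) (hσ : σ ^ 2 = 1) (hτ : τ ^ 2 = 1)
    {a : α} (hσa : σ a ≠ a) (hτa : τ a ≠ a) (hne : σ a ≠ τ a)
    (h : {v : α → R | ∀ i, v (ρ i) = v i} ⊆
      {v : α → R | (∀ i, v (σ i) = v i) ∧ ∀ i, v (τ i) = v i}) :
    ρ ∉ Subgroup.closure {σ, τ} := by
  intro hmem
  have hρ_sq : ρ ^ 2 = 1 := by
    refine pow_eq_one_of_mem_closure ?_ ?_ hmem
    · rintro x (rfl | rfl) y (rfl | rfl)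
      exacts [rfl, hστ, hστ.symm, rfl]
    · rintro x (rfl | rfl)
      exacts [hσ, hτ]
  have hρ : ρ (ρ a) = a := by rw [← Perm.mul_apply, ← sq, hρ_sq, Perm.one_apply]
  have hσ_cycle : ρ.SameCycle a (σ a) :=
    sameCycle_of_forall_invariant_apply_eq fun v hv => (h hv).1 a
  have hτ_cycle : ρ.SameCycle a (τ a) :=
    sameCycle_of_forall_invariant_apply_eq fun v hv => (h hv).2 a
  have hσ_eq : σ a = ρ a := (eq_or_eq_apply_of_sameCycle hρ hσ_cycle).resolve_left hσa
  have hτ_eq : τ a = ρ a := (eq_or_eq_apply_of_sameCycle hρ hτ_cycle).resolve_left hτa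
  exact hne (hσ_eq.trans hτ_eq.symm)

/-- If `ρ̂` is a permutation of `{0,1,2,3}` whose vector state-symmetry space
is exactly the space of vectors having both `(0 1)(2 3)` and `(0 2)(1 3)` as state
symmetries, then `ρ̂` is not an element of the Klein four-group generated by these two
double transpositions. -/
theorem perm_with_klein_symmetry_space_not_in_klein_group
    (ρ : Equiv.Perm (Fin 4))
    (h : {v : Fin 4 → ℝ | ∀ i, v (ρ i) = v i} =
         {v : Fin 4 → ℝ |
           (∀ i, v ((Equiv.swap (0 : Fin 4) 1 * Equiv.swap 2 3 : Equiv.Perm (Fin 4)) i) = v i) ∧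
           (∀ i, v ((Equiv.swap (0 : Fin 4) 2 * Equiv.swap 1 3 : Equiv.Perm (Fin 4)) i) = v i)}) :
    ρ ∉ Subgroup.closure
        ({Equiv.swap (0 : Fin 4) 1 * Equiv.swap 2 3,
          Equiv.swap (0 : Fin 4) 2 * Equiv.swap 1 3} : Set (Equiv.Perm (Fin 4))) :=
  perm_with_klein_symmetry_space_not_in_klein_group_general (a := 0)
    (by decide) (by decide) (by decide) (by decide) (by decide) (by decide) h.subset
end

section
/- Let (v⁽ⁱ⁾)_{i∈ℕ} be a sequence of vectors in ℝⁿ generated by an n×n real matrix M (i.e. v⁽ⁱ⁺¹⁾ = M v⁽ⁱ⁾ for all i), and suppose the sequence is periodic with period p ≥ 1 (i.e. v⁽ⁱ⁺ᵖ⁾ = v⁽ⁱ⁾ for all i). Then the sequence is generated by some n×n real matrix N satisfying Nᵖ = I: there exists N with Nᵖ equal to the identity matrix and v⁽ⁱ⁺¹⁾ = N v⁽ⁱ⁾ for all i. -/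
open Matrix

/-!
The linear span `W` of the sequence is `M`-invariant, and periodicity says that the `p`-th power of
the restriction of `M` to `W` is the identity. Outside `W` the matrix is unconstrained, so choose a
complement of `W` and let `N` be `M` on `W` and the identity on the complement.
-/

section ExtendByOne

variable {R V : Type*} [Ring R] [AddCommGroup V] [Module R V] {W Q : Submodule R V}

/-- The extension of an endomorphism of `W` to the whole module that is the identity on the
complement `Q`. It is bundled as a monoid homomorphism so that it transports equations
`f ^ p = 1`. -/
noncomputable def endExtendByOne (h : IsCompl W Q) : Module.End R W →* Module.End R V where
  toFun f := LinearMap.ofIsCompl h (W.subtype ∘ₗ f) Q.subtype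
  map_one' := LinearMap.ofIsCompl_eq h (fun _ ↦ rfl) (fun _ ↦ rfl)
  map_mul' f g := LinearMap.ofIsCompl_eq h (by simp) (by simp)

theorem endExtendByOne_apply_coe (h : IsCompl W Q) (f : Module.End R W) (w : W) :
    endExtendByOne h f w = f w :=
  LinearMap.ofIsCompl_apply_left h w

end ExtendByOne

section GeneratedSequence

variable {R V : Type*} [Semiring R] [AddCommMonoid V] [Module R V]
  {f : Module.End R V} {v : ℕ → V}

theorem pow_apply_of_forall_succ_eq (hgen : ∀ i, v (i + 1) = f (v i)) (k i : ℕ) :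
    (f ^ k) (v i) = v (i + k) := by
  induction k with
  | zero => simp
  | succ k ih => rw [pow_succ', Module.End.mul_apply, ih, ← hgen, add_assoc]

theorem apply_mem_span_range_of_mem_span_range (hgen : ∀ i, v (i + 1) = f (v i)) :
    ∀ w ∈ Submodule.span R (Set.range v), f w ∈ Submodule.span R (Set.range v) := by
  suffices Submodule.span R (Set.range v) ≤ (Submodule.span R (Set.range v)).comap f from this
  rw [Submodule.span_le]
  rintro _ ⟨i, rfl⟩
  exact Submodule.subset_span ⟨i + 1, hgen i⟩

theorem restrict_span_range_pow_eq_one_of_periodic (hgen : ∀ i, v (i + 1) = f (v i)) {p : ℕ}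
    (hper : Function.Periodic v p) :
    f.restrict (apply_mem_span_range_of_mem_span_range hgen) ^ p = 1 := by
  have hfix : Set.EqOn (f ^ p) (1 : Module.End R V) (Set.range v) := by
    rintro _ ⟨i, rfl⟩
    rw [pow_apply_of_forall_succ_eq hgen, hper, Module.End.one_apply]
  rw [Module.End.pow_restrict]
  ext w
  exact LinearMap.eqOn_span hfix w.2

end GeneratedSequence

theorem exists_end_pow_eq_one_of_periodic {R V : Type*} [Ring R] [AddCommGroup V] [Module R V]
    [IsSemisimpleModule R V] {f : Module.End R V} {v : ℕ → V} (hgen : ∀ i, v (i + 1) = f (v i))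
    {p : ℕ} (hper : Function.Periodic v p) :
    ∃ g : Module.End R V, g ^ p = 1 ∧ ∀ i, v (i + 1) = g (v i) := by
  obtain ⟨Q, hQ⟩ := exists_isCompl (Submodule.span R (Set.range v))
  let f' := f.restrict (apply_mem_span_range_of_mem_span_range hgen)
  refine ⟨endExtendByOne hQ f', ?_, fun i ↦ ?_⟩
  · rw [← map_pow, restrict_span_range_pow_eq_one_of_periodic hgen hper, map_one]
  · have hv : v i ∈ Submodule.span R (Set.range v) := Submodule.subset_span ⟨i, rfl⟩
    calc v (i + 1) = f' ⟨v i, hv⟩ := hgen i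
      _ = endExtendByOne hQ f' (v i) := (endExtendByOne_apply_coe hQ f' ⟨v i, hv⟩).symm

theorem periodic_sequence_generated_by_matrix_of_finite_order_general {R ι : Type*} [CommRing R]
    [IsSemisimpleRing R] [Fintype ι] [DecidableEq ι] (M : Matrix ι ι R) (v : ℕ → ι → R)
    (hgen : ∀ i, v (i + 1) = M *ᵥ v i) {p : ℕ} (hper : Function.Periodic v p) :
    ∃ N : Matrix ι ι R, N ^ p = 1 ∧ ∀ i, v (i + 1) = N *ᵥ v i := by
  obtain ⟨g, hgp, hg⟩ := exists_end_pow_eq_one_of_periodic (f := M.mulVecLin) hgen hper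
  refine ⟨LinearMap.toMatrixAlgEquiv' g, ?_, fun i ↦ ?_⟩
  · rw [← map_pow, hgp, map_one]
  · exact (hg i).trans (LinearMap.toMatrix'_mulVec g (v i)).symm

/-- A matrix-generated vector sequence which is periodic with period `p ≥ 1`
is generated by some matrix `N` with `N ^ p = I`. -/
theorem periodic_sequence_generated_by_matrix_of_finite_order
    (n : ℕ) (M : Matrix (Fin n) (Fin n) ℝ) (v : ℕ → Fin n → ℝ)
    (hgen : ∀ i : ℕ, v (i + 1) = M *ᵥ v i)
    (p : ℕ) (hp : 1 ≤ p) (hper : ∀ i : ℕ, v (i + p) = v i) :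
    ∃ N : Matrix (Fin n) (Fin n) ℝ, N ^ p = 1 ∧ ∀ i : ℕ, v (i + 1) = N *ᵥ v i :=
  periodic_sequence_generated_by_matrix_of_finite_order_general M v hgen hper
end
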